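/- Extension lemma for polynomial differential forms: given forms α₀,…,αₙ ∈ A^*(Δ_{n−1}) satisfying the compatibility conditions d_{i,n−1}^*(α_j) = d_{j−1,n−1}^*(α_i) for all 0 ≤ i < j ≤ n, there exists β ∈ A^*(Δ_n) such that d_{i,n}^*(β) = α_i for all 0 ≤ i ≤ n. -/

import Mathlib

/-!
STATEMENT 6: Extension lemma for polynomial differential forms: given
α₀,…,α_{n+2} ∈ A^*(Δ_{n+1}) with d_{i}^*(α_j) = d_{j−1}^*(α_i) for i < j
(i.e. an element of A^*(∂Δ_{n+2})), there exists β ∈ A^*(Δ_{n+2}) with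
d_{i}^*(β) = α_i for all i. Here d_{i,k}^* are the coface pullbacks, induced by
the strictly increasing maps [k−1] → [k] skipping i (Fin.succAbove).
-/

/-- A model of the polynomial de Rham algebra `A^*(Δ_n)` (see STATEMENT 4). -/
structure SimplexForms (n : ℕ) where
  A : Type
  [ringA : Ring A]
  [algA : Algebra ℂ A]
  grading : ℕ → Submodule ℂ A
  [gradedA : GradedAlgebra grading]
  gcomm : ∀ (p q : ℕ) (a b : A), a ∈ grading p → b ∈ grading q →
    a * b = ((-1 : ℤ) ^ (p * q)) • (b * a)
  d : A →ₗ[ℂ] A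
  d_mem : ∀ (q : ℕ) (a : A), a ∈ grading q → d a ∈ grading (q + 1)
  d_sq : ∀ a : A, d (d a) = 0
  leibniz : ∀ (p : ℕ) (a b : A), a ∈ grading p →
    d (a * b) = d a * b + ((-1 : ℤ) ^ p) • (a * d b)
  x : Fin (n + 1) → A
  x_mem : ∀ i, x i ∈ grading 0
  sum_x : ∑ i, x i = 1
  sum_dx : ∑ i, d (x i) = 0

attribute [instance] SimplexForms.ringA SimplexForms.algA SimplexForms.gradedA

/-- `Ω` is the polynomial de Rham algebra `A^*(Δ_n)`: universal property. -/
def IsPolyDeRham {n : ℕ} (Ω : SimplexForms n) : Prop :=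
  ∀ B : SimplexForms n, ∃! φ : Ω.A →ₐ[ℂ] B.A,
    (∀ a, φ (Ω.d a) = B.d (φ a)) ∧
    (∀ (p : ℕ) (a : Ω.A), a ∈ Ω.grading p → φ a ∈ B.grading p) ∧
    (∀ i, φ (Ω.x i) = B.x i)

/-- The property of being the pullback morphism `a^*` induced by
`a : [n] → [m]`: a morphism of dgas (commuting with `d` and preserving the
grading) with `φ(x_j) = Σ_{i : a i = j} x_i`. -/
def PullbackProp {m n : ℕ} (Ωm : SimplexForms m) (Ωn : SimplexForms n)
    (a : Fin (n + 1) → Fin (m + 1)) (φ : Ωm.A →ₐ[ℂ] Ωn.A) : Prop :=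
  (∀ y, φ (Ωm.d y) = Ωn.d (φ y)) ∧
  (∀ (p : ℕ) (y : Ωm.A), y ∈ Ωm.grading p → φ y ∈ Ωn.grading p) ∧
  (∀ j : Fin (m + 1),
    φ (Ωm.x j) = ∑ i ∈ Finset.univ.filter (fun i => a i = j), Ωn.x i)

/-!
Let `γ` be a form on the `r`-th face of a simplex. For each vertex `j` of that face, let `σⱼ`
retract the simplex onto the face by sending the vertex `r` to `j`. Then `∑ⱼ xⱼ · σⱼ^* γ`
restricts to `γ` on the face, because `∑ⱼ xⱼ = 1` there. Moreover, if `γ` vanishes on the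
subface opposite `i`, this extension vanishes on the face opposite `i`: there `xᵢ = 0`, while
for `j ≠ i` the map `σⱼ` sends that face into the subface opposite `i`. Hence a form can be
corrected on one face after another without spoiling the faces where it already has the right
values. The order of the faces plays no role, so any set of faces will do, in particular a horn.
-/

/-- The forms `Ω` with the coordinates pulled back along a map `a : [n] → [m]` of vertices. A dga
morphism into it that preserves the coordinates is the same as a pullback morphism along `a`, so the
universal property of `A^*(Δ_m)` applies. -/
def SimplexForms.reindex {m n : ℕ} (Ω : SimplexForms n) (a : Fin (n + 1) → Fin (m + 1)) :
    SimplexForms m where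
  A := Ω.A
  grading := Ω.grading
  gcomm := Ω.gcomm
  d := Ω.d
  d_mem := Ω.d_mem
  d_sq := Ω.d_sq
  leibniz := Ω.leibniz
  x j := ∑ i ∈ Finset.univ.filter (fun i => a i = j), Ω.x i
  x_mem _ := Submodule.sum_mem _ fun i _ => Ω.x_mem i
  sum_x := by rw [Finset.sum_fiberwise, Ω.sum_x]
  sum_dx := by
    simp only [map_sum]
    rw [Finset.sum_fiberwise Finset.univ a fun i => Ω.d (Ω.x i), Ω.sum_dx]

section Pullback

variable {l m n : ℕ} {Ωl : SimplexForms l} {Ωm : SimplexForms m} {Ωn : SimplexForms n}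

theorem IsPolyDeRham.existsUnique_pullback (h : IsPolyDeRham Ωm) (Ωn : SimplexForms n)
    (a : Fin (n + 1) → Fin (m + 1)) : ∃! φ : Ωm.A →ₐ[ℂ] Ωn.A, PullbackProp Ωm Ωn a φ :=
  h (Ωn.reindex a)

namespace PullbackProp

theorem id (Ω : SimplexForms n) : PullbackProp Ω Ω id (AlgHom.id ℂ Ω.A) :=
  ⟨fun _ => rfl, fun _ _ hy => hy, fun j => by simp [Finset.sum_filter]⟩

theorem comp {a : Fin (m + 1) → Fin (l + 1)} {b : Fin (n + 1) → Fin (m + 1)}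
    {φ : Ωl.A →ₐ[ℂ] Ωm.A} {ψ : Ωm.A →ₐ[ℂ] Ωn.A}
    (hφ : PullbackProp Ωl Ωm a φ) (hψ : PullbackProp Ωm Ωn b ψ) :
    PullbackProp Ωl Ωn (a ∘ b) (ψ.comp φ) := by
  obtain ⟨hφd, hφdeg, hφx⟩ := hφ
  obtain ⟨hψd, hψdeg, hψx⟩ := hψ
  refine ⟨fun y => ?_, fun p y hy => hψdeg p _ (hφdeg p y hy), fun j => ?_⟩
  · simp only [AlgHom.comp_apply, hφd, hψd]
  · simp only [AlgHom.comp_apply, hφx, map_sum, hψx]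
    rw [Finset.sum_comm' (t' := Finset.univ.filter fun k => (a ∘ b) k = j) (s' := fun k => {b k})]
    · simp only [Finset.sum_singleton]
    · intro i k
      simp only [Finset.mem_filter_univ, Finset.mem_singleton, Function.comp_apply]
      grind

theorem map_x_apply {a : Fin (n + 1) → Fin (m + 1)} {φ : Ωm.A →ₐ[ℂ] Ωn.A}
    (hφ : PullbackProp Ωm Ωn a φ) (ha : Function.Injective a) (i : Fin (n + 1)) :
    φ (Ωm.x (a i)) = Ωn.x i := by
  simp [hφ.2.2, ha.eq_iff, Finset.sum_filter]

theorem map_x_eq_zero {a : Fin (n + 1) → Fin (m + 1)} {φ : Ωm.A →ₐ[ℂ] Ωn.A}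
    (hφ : PullbackProp Ωm Ωn a φ) {j : Fin (m + 1)} (hj : ∀ i, a i ≠ j) : φ (Ωm.x j) = 0 := by
  simp [hφ.2.2, hj]

theorem map_eq_zero_of_factor {a : Fin (n + 1) → Fin (l + 1)} {b : Fin (m + 1) → Fin (l + 1)}
    {c : Fin (n + 1) → Fin (m + 1)} {φ : Ωl.A →ₐ[ℂ] Ωn.A} {ψ : Ωl.A →ₐ[ℂ] Ωm.A}
    (hl : IsPolyDeRham Ωl) (hm : IsPolyDeRham Ωm) (hφ : PullbackProp Ωl Ωn a φ)
    (hψ : PullbackProp Ωl Ωm b ψ) (hfactor : a = b ∘ c) {γ : Ωl.A} (hγ : ψ γ = 0) : φ γ = 0 := by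
  subst hfactor
  obtain ⟨χ, hχ, -⟩ := hm.existsUnique_pullback Ωn c
  have hφχ : φ = χ.comp ψ := (hl.existsUnique_pullback Ωn _).unique hφ (hψ.comp hχ)
  rw [hφχ, AlgHom.comp_apply, hγ, map_zero]

end PullbackProp

end Pullback

section Collapse

variable {n : ℕ}

/-- The map of vertices `[n + 1] → [n]` that retracts onto the `r`-th face, sending the vertex `r`
to the vertex `j` of the face. -/
def collapse (r : Fin (n + 2)) (j : Fin (n + 1)) : Fin (n + 2) → Fin (n + 1) :=
  r.insertNth (α := fun _ => Fin (n + 1)) j id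

theorem collapse_comp_succAbove (r : Fin (n + 2)) (j : Fin (n + 1)) :
    collapse r j ∘ r.succAbove = id := by
  funext k
  simp [collapse]

theorem eq_succAbove_of_collapse_eq {r k : Fin (n + 2)} {i j : Fin (n + 1)} (hij : i ≠ j)
    (hk : collapse r j k = i) : k = r.succAbove i := by
  rcases Fin.eq_self_or_eq_succAbove r k with rfl | ⟨l, rfl⟩
  · exact absurd (by simpa [collapse] using hk.symm) hij
  · simpa [collapse] using hk

theorem exists_collapse_comp_succAbove_eq (r : Fin (n + 3)) {i j : Fin (n + 2)} (hij : i ≠ j) :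
    ∃ c : Fin (n + 2) → Fin (n + 1),
      collapse r j ∘ (r.succAbove i).succAbove = i.succAbove ∘ c := by
  have hmiss (k : Fin (n + 2)) : collapse r j ((r.succAbove i).succAbove k) ≠ i := fun hk =>
    Fin.succAbove_ne _ _ (eq_succAbove_of_collapse_eq hij hk)
  choose c hc using fun k => Fin.exists_succAbove_eq (hmiss k)
  exact ⟨c, funext fun k => (hc k).symm⟩

end Collapse

section Faces

theorem face_eq_face_of_lt {X Y : Type*} {m : ℕ} {δ : Fin (m + 1) → X → Y} {α : Fin (m + 2) → X}
    {s : Set (Fin (m + 2))}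
    (hα : ∀ i ∈ s, ∀ j ∈ s, ∀ hij : i < j,
      δ (i.castPred (Fin.ne_last_of_lt hij)) (α j) = δ (j.pred (Fin.ne_zero_of_lt hij)) (α i))
    {r : Fin (m + 2)} {k : Fin (m + 1)} (hr : r ∈ s) (hk : r.succAbove k ∈ s) :
    δ k (α r) = δ (k.predAbove r) (α (r.succAbove k)) := by
  rcases lt_or_ge k.castSucc r with hlt | hle
  · rw [Fin.succAbove_of_castSucc_lt _ _ hlt] at hk ⊢
    rw [Fin.predAbove_of_castSucc_lt _ _ hlt, ← hα _ hk _ hr hlt, Fin.castPred_castSucc]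
  · rw [Fin.succAbove_of_le_castSucc _ _ hle] at hk ⊢
    have hlt : r < k.succ := Fin.le_castSucc_iff.mp hle
    rw [Fin.predAbove_of_le_castSucc _ _ hle, hα _ hr _ hk hlt, Fin.pred_succ]

variable {n : ℕ} {Ω₀ : SimplexForms n} {Ω₁ : SimplexForms (n + 1)} {Ω₂ : SimplexForms (n + 2)}
  {d₁ : Fin (n + 2) → Ω₁.A →ₐ[ℂ] Ω₀.A} {d₂ : Fin (n + 3) → Ω₂.A →ₐ[ℂ] Ω₁.A}

theorem face_face (hΩ₂ : IsPolyDeRham Ω₂)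
    (hd₁ : ∀ i, PullbackProp Ω₁ Ω₀ (Fin.succAbove i) (d₁ i))
    (hd₂ : ∀ i, PullbackProp Ω₂ Ω₁ (Fin.succAbove i) (d₂ i))
    (r : Fin (n + 3)) (k : Fin (n + 2)) (β : Ω₂.A) :
    d₁ k (d₂ r β) = d₁ (k.predAbove r) (d₂ (r.succAbove k) β) := by
  have hcomp := (hd₂ (r.succAbove k)).comp (hd₁ (k.predAbove r))
  have hcoface : (r.succAbove k).succAbove ∘ (k.predAbove r).succAbove =
      r.succAbove ∘ k.succAbove :=
    funext (Fin.succAbove_succAbove_succAbove_predAbove r k)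
  rw [hcoface] at hcomp
  exact DFunLike.congr_fun
    ((hΩ₂.existsUnique_pullback Ω₀ _).unique ((hd₂ r).comp (hd₁ k)) hcomp) β

theorem exists_extension_of_face (hΩ₀ : IsPolyDeRham Ω₀) (hΩ₁ : IsPolyDeRham Ω₁)
    (hd₁ : ∀ i, PullbackProp Ω₁ Ω₀ (Fin.succAbove i) (d₁ i))
    (hd₂ : ∀ i, PullbackProp Ω₂ Ω₁ (Fin.succAbove i) (d₂ i)) (r : Fin (n + 3)) (γ : Ω₁.A) :
    ∃ η : Ω₂.A, d₂ r η = γ ∧ ∀ i, d₁ i γ = 0 → d₂ (r.succAbove i) η = 0 := by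
  choose S hS _ using fun j => hΩ₁.existsUnique_pullback Ω₂ (collapse r j)
  refine ⟨∑ j, Ω₂.x (r.succAbove j) * S j γ, ?_, fun i hγ => ?_⟩
  · have hretract (j : Fin (n + 2)) : d₂ r (S j γ) = γ := by
      have hcomp := (hS j).comp (hd₂ r)
      rw [collapse_comp_succAbove] at hcomp
      exact DFunLike.congr_fun ((hΩ₁.existsUnique_pullback Ω₁ id).unique hcomp (.id Ω₁)) γ
    have hcoord (j : Fin (n + 2)) : d₂ r (Ω₂.x (r.succAbove j)) = Ω₁.x j :=
      (hd₂ r).map_x_apply Fin.succAbove_right_injective j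
    simp only [map_sum, map_mul, hretract, hcoord]
    rw [← Finset.sum_mul, Ω₁.sum_x, one_mul]
  · rw [map_sum]
    refine Finset.sum_eq_zero fun j _ => ?_
    rw [map_mul]
    rcases eq_or_ne i j with rfl | hij
    · rw [(hd₂ _).map_x_eq_zero (Fin.succAbove_ne _), zero_mul]
    · obtain ⟨c, hc⟩ := exists_collapse_comp_succAbove_eq r hij
      have hvanish : d₂ (r.succAbove i) (S j γ) = 0 :=
        ((hS j).comp (hd₂ _)).map_eq_zero_of_factor hΩ₁ hΩ₀ (hd₁ i) hc hγ
      rw [hvanish, mul_zero]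

theorem simplex_extension_general (hΩ₀ : IsPolyDeRham Ω₀) (hΩ₁ : IsPolyDeRham Ω₁)
    (hΩ₂ : IsPolyDeRham Ω₂)
    (hd₁ : ∀ i, PullbackProp Ω₁ Ω₀ (Fin.succAbove i) (d₁ i))
    (hd₂ : ∀ i, PullbackProp Ω₂ Ω₁ (Fin.succAbove i) (d₂ i))
    (s : Finset (Fin (n + 3))) (α : Fin (n + 3) → Ω₁.A)
    (hα : ∀ i ∈ s, ∀ j ∈ s, ∀ hij : i < j,
      d₁ (i.castPred (Fin.ne_last_of_lt hij)) (α j) =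
        d₁ (j.pred (Fin.ne_zero_of_lt hij)) (α i)) :
    ∃ β : Ω₂.A, ∀ i ∈ s, d₂ i β = α i := by
  induction s using Finset.induction_on with
  | empty => exact ⟨0, by simp⟩
  | insert r s hr ih =>
    obtain ⟨β, hβ⟩ := ih fun i hi j hj =>
      hα i (Finset.mem_insert_of_mem hi) j (Finset.mem_insert_of_mem hj)
    obtain ⟨η, hηr, hη⟩ := exists_extension_of_face hΩ₀ hΩ₁ hd₁ hd₂ r (α r - d₂ r β)
    refine ⟨β + η, (Finset.forall_mem_insert _ _ _).mpr ⟨?_, fun i hi => ?_⟩⟩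
    · rw [map_add, hηr, add_sub_cancel]
    · obtain ⟨k, rfl⟩ := Fin.exists_succAbove_eq (ne_of_mem_of_not_mem hi hr)
      have hcompat : d₁ k (α r) = d₁ (k.predAbove r) (α (r.succAbove k)) :=
        face_eq_face_of_lt (δ := fun i => d₁ i) (s := ↑(insert r s)) hα
          (Finset.mem_insert_self r s) (Finset.mem_insert_of_mem hi)
      have herror : d₁ k (α r - d₂ r β) = 0 := by
        rw [map_sub, hcompat, face_face hΩ₂ hd₁ hd₂, hβ _ hi, sub_self]
      rw [map_add, hη k herror, add_zero, hβ _ hi]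

end Faces

/-- (Extension lemma, Lemma 9.4 of Griffiths–Morgan.)
Given the coface pullback morphisms `pb k i = d_{i,k+1}^* : A^*(Δ_{k+1}) → A^*(Δ_k)`
and polynomial forms `α i ∈ A^*(Δ_{n+1})`, `0 ≤ i ≤ n+2`, satisfying the boundary
compatibility `d_{i}^*(α j) = d_{j-1}^*(α i)` for `i < j`, there is a form
`β ∈ A^*(Δ_{n+2})` with `d_{i}^*(β) = α i` for all `i`. -/
theorem simplex_extension
    (F : ∀ k, SimplexForms k) (hF : ∀ k, IsPolyDeRham (F k))
    (pb : ∀ (k : ℕ) (i : Fin (k + 2)), (F (k + 1)).A →ₐ[ℂ] (F k).A)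
    (hpb : ∀ (k : ℕ) (i : Fin (k + 2)),
      PullbackProp (F (k + 1)) (F k) (Fin.succAbove i) (pb k i))
    (n : ℕ) (α : Fin (n + 3) → (F (n + 1)).A)
    (hα : ∀ (i j : Fin (n + 3)) (hij : i.1 < j.1),
      pb n ⟨i.1, by have := j.isLt; omega⟩ (α j) =
        pb n ⟨j.1 - 1, by have := j.isLt; omega⟩ (α i)) :
    ∃ β : (F (n + 2)).A, ∀ i : Fin (n + 3), pb (n + 1) i β = α i := by
  obtain ⟨β, hβ⟩ := simplex_extension_general (hF n) (hF _) (hF _) (hpb n) (hpb _) Finset.univ α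
    fun i _ j _ hij => hα i j hij
  exact ⟨β, fun i => hβ i (Finset.mem_univ i)⟩
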